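/- For all μ, ν ∈ 𝒫_p(𝒳_1 × 𝒫_p(𝒳_2)) one has CW̄_p(μ, ν) ≤ AW̄_p(μ, ν). -/

import Mathlib

open MeasureTheory ProbabilityTheory ENNReal Filter Topology

noncomputable section

namespace AWPaper

/-! ### Generic constructions -/

variable {α β : Type*}

/-- The set of couplings of two measures. -/
def Cpl [MeasurableSpace α] [MeasurableSpace β] (μ : Measure α) (ν : Measure β) :
    Set (Measure (α × β)) :=
  {π | π.map Prod.fst = μ ∧ π.map Prod.snd = ν}

/-- The `p`-Wasserstein distance (with values in `ℝ≥0∞`) associated to an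
`ℝ≥0∞`-valued distance function `d`. -/
def Wp [MeasurableSpace α] (p : ℝ) (d : α → α → ℝ≥0∞) (μ ν : Measure α) : ℝ≥0∞ :=
  ⨅ π ∈ Cpl μ ν, (∫⁻ z, d z.1 z.2 ^ p ∂π) ^ (1 / p)

/-- The topology generated by the open balls of an `ℝ≥0∞`-valued distance
function.  For a genuine metric this is the metric topology. -/
def ballTop (d : α → α → ℝ≥0∞) : TopologicalSpace α :=
  TopologicalSpace.generateFrom {s | ∃ x ε, 0 < ε ∧ s = {y | d x y < ε}}

/-- The product distance of two `ℝ≥0∞`-valued distances, `ℓ^p`-style. -/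
def prodDist (p : ℝ) (d₁ : α → α → ℝ≥0∞) (d₂ : β → β → ℝ≥0∞) :
    α × β → α × β → ℝ≥0∞ :=
  fun u v => (d₁ u.1 v.1 ^ p + d₂ u.2 v.2 ^ p) ^ (1 / p)

/-- Membership in the `p`-Wasserstein space: a probability measure with finite
`p`-th moment (w.r.t. the distance function `d`). -/
def MemPp [MeasurableSpace α] (p : ℝ) (d : α → α → ℝ≥0∞) (μ : Measure α) : Prop :=
  IsProbabilityMeasure μ ∧ ∃ x₀, ∫⁻ x, d x₀ x ^ p ∂μ ≠ ∞

/-- The weak topology on measures induced by integration of bounded continuous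
functions, for a given topology `τ` on the base space. -/
def weakTop [MeasurableSpace α] (τ : TopologicalSpace α) : TopologicalSpace (Measure α) :=
  TopologicalSpace.induced
    (fun μ => fun f : @BoundedContinuousFunction α ℝ τ _ => ∫ x, f x ∂μ)
    Pi.topologicalSpace

/-- The product topology built from two explicitly given topologies. -/
def prodTop (τ₁ : TopologicalSpace α) (τ₂ : TopologicalSpace β) : TopologicalSpace (α × β) :=
  TopologicalSpace.induced Prod.fst τ₁ ⊓ TopologicalSpace.induced Prod.snd τ₂

/-- An everywhere-defined version of the disintegration kernel: it agrees with
`Measure.condKernel` on finite measures. -/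
def condK [MeasurableSpace α] [MeasurableSpace β] [StandardBorelSpace β] [Nonempty β]
    (ρ : Measure (α × β)) : Kernel α β :=
  letI := Classical.dec (IsFiniteMeasure ρ)
  if h : IsFiniteMeasure ρ then @Measure.condKernel α β _ _ _ _ ρ h else 0

/-- The disintegration map `𝒫(A × B) → 𝒫(A × 𝒫(B))`. -/
def disint [MeasurableSpace α] [MeasurableSpace β] [StandardBorelSpace β] [Nonempty β]
    (μ : Measure (α × β)) : Measure (α × Measure β) :=
  μ.map (fun z => (z.1, condK μ z.1))

/-- The intensity ("und") map `𝒫(A × 𝒫(B)) → 𝒫(A × B)`. -/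
def und [MeasurableSpace α] [MeasurableSpace β] (μ : Measure (α × Measure β)) :
    Measure (α × β) :=
  μ.bind (fun z => (Measure.dirac z.1).prod z.2)

/-! ### Path spaces -/

variable {X : Type*} [MeasurableSpace X]

/-- The path-space distance `ρ̄((x_t),(y_t)) = (∑ ρ(x_t,y_t)^p)^{1/p}`. -/
def pathDist (p : ℝ) (d : X → X → ℝ≥0∞) {N : ℕ} :
    (Fin N → X) → (Fin N → X) → ℝ≥0∞ :=
  fun x y => (∑ t, d (x t) (y t) ^ p) ^ (1 / p)

/-- The first `t` coordinates of a path. -/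
def restr {N : ℕ} (t : ℕ) (h : t ≤ N) (x : Fin N → X) : Fin t → X :=
  fun s => x (Fin.castLE h s)

/-- The last `N - t` coordinates of a path. -/
def tailr {N : ℕ} (t : ℕ) (h : t ≤ N) (x : Fin N → X) : Fin (N - t) → X :=
  fun s => x ⟨t + s.1, by have := s.2; omega⟩

/-- A coupling `π` of two path measures is causal: for every `t` and Borel
`A ⊆ 𝒳^t`, `π((Y_1,…,Y_t) ∈ A | X) = π((Y_1,…,Y_t) ∈ A | X_1,…,X_t)` a.s. -/
def Causal {N : ℕ} (π : Measure ((Fin N → X) × (Fin N → X))) : Prop :=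
  ∀ (t : ℕ) (h : t ≤ N) (A : Set (Fin t → X)), MeasurableSet A →
    (π[fun z => A.indicator (fun _ => (1 : ℝ)) (restr t h z.2) |
        MeasurableSpace.comap Prod.fst inferInstance])
      =ᵐ[π]
    (π[fun z => A.indicator (fun _ => (1 : ℝ)) (restr t h z.2) |
        MeasurableSpace.comap (fun z => restr t h z.1) inferInstance])

/-- Bicausal couplings. -/
def Bicausal {N : ℕ} (π : Measure ((Fin N → X) × (Fin N → X))) : Prop :=
  Causal π ∧ Causal (π.map Prod.swap)

/-- The causal Wasserstein "distance" `CW_p`. -/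
def CW (p : ℝ) (d : X → X → ℝ≥0∞) {N : ℕ} (μ ν : Measure (Fin N → X)) : ℝ≥0∞ :=
  ⨅ π ∈ {π ∈ Cpl μ ν | Causal π}, (∫⁻ z, pathDist p d z.1 z.2 ^ p ∂π) ^ (1 / p)

/-- The symmetrized causal Wasserstein distance `SCW_p`. -/
def SCW (p : ℝ) (d : X → X → ℝ≥0∞) {N : ℕ} (μ ν : Measure (Fin N → X)) : ℝ≥0∞ :=
  max (CW p d μ ν) (CW p d ν μ)

/-- The adapted (nested, bicausal) Wasserstein distance `AW_p`. -/
def AW (p : ℝ) (d : X → X → ℝ≥0∞) {N : ℕ} (μ ν : Measure (Fin N → X)) : ℝ≥0∞ :=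
  ⨅ π ∈ {π ∈ Cpl μ ν | Bicausal π}, (∫⁻ z, pathDist p d z.1 z.2 ^ p ∂π) ^ (1 / p)

/-! ### Nested spaces (Pflug's nested distributions / Vershik's iterated spaces) -/

/-- A measurable space together with an `ℝ≥0∞`-valued distance. -/
structure QMS : Type 1 where
  carrier : Type
  inst : MeasurableSpace carrier
  dist : carrier → carrier → ℝ≥0∞

/-- The nested sequence of spaces: `nest X _ d p 0 = 𝒳` (this is `𝒳_N`), and
`nest X _ d p (k+1) = 𝒳 × 𝒫(nest X _ d p k)` with the nested distance
`D = (ρ^p + 𝒲_p^p)^{1/p}`.  Thus `𝒳_1` (for `N = k+1` time points) is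
`nest X _ d p k`. -/
def nest (X : Type) (mX : MeasurableSpace X) (d : X → X → ℝ≥0∞) (p : ℝ) : ℕ → QMS
  | 0 => ⟨X, mX, d⟩
  | (k + 1) =>
    let Q := nest X mX d p k
    ⟨X × @Measure Q.carrier Q.inst,
      @Prod.instMeasurableSpace _ _ mX (@Measure.instMeasurableSpace _ Q.inst),
      fun a b => (d a.1 b.1 ^ p + (@Wp _ Q.inst p Q.dist a.2 b.2) ^ p) ^ (1 / p)⟩

section NMapSec

variable (Y : Type) [mY : MeasurableSpace Y] [TopologicalSpace Y] [PolishSpace Y]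
  [BorelSpace Y] [Nonempty Y]

/-- The map `𝒩` sending the law of a process with `k+1` time steps to the
corresponding nested distribution, via iterated regular conditional laws. -/
def NMap (d : Y → Y → ℝ≥0∞) (p : ℝ) :
    ∀ k : ℕ, Measure (Fin (k + 1) → Y) →
      @Measure (nest Y mY d p k).carrier (nest Y mY d p k).inst
  | 0, μ =>
    letI : MeasurableSpace (nest Y mY d p 0).carrier := (nest Y mY d p 0).inst
    μ.map (fun x => x 0)
  | (k + 1), μ =>
    letI : MeasurableSpace (nest Y mY d p k).carrier := (nest Y mY d p k).inst
    letI : MeasurableSpace (nest Y mY d p (k + 1)).carrier := (nest Y mY d p (k + 1)).inst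
    (μ.map (fun x => x 0)).map
      (fun x₀ => (x₀, NMap d p k
        ((condK (μ.map (fun x => (x 0, fun s : Fin (k + 1) => x s.succ)))) x₀)))

end NMapSec

section PathStructures

variable {Y : Type*} [mY : MeasurableSpace Y]

/-- A process `L` is adapted: `L t` depends only on the first `t+1` coordinates. -/
def AdaptedProc {N : ℕ} (L : Fin N → (Fin N → Y) → ℝ) : Prop :=
  ∀ (t : Fin N) (x y : Fin N → Y), (∀ s : Fin N, s ≤ t → x s = y s) → L t x = L t y

/-- `τ` is a stopping time of the canonical filtration on the path space. -/
def IsStopTime {N : ℕ} (τ : (Fin N → Y) → Fin N) : Prop :=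
  ∀ t : Fin N,
    MeasurableSet[MeasurableSpace.comap (restr (X := Y) (t.1 + 1) t.2) inferInstance]
      {x | τ x = t}

/-- The optimal stopping value `v^L(μ)`. -/
def stopVal {N : ℕ} (L : Fin N → (Fin N → Y) → ℝ) (μ : Measure (Fin N → Y)) : ℝ :=
  ⨅ τ : {τ : (Fin N → Y) → Fin N // IsStopTime τ}, ∫ x, L (τ.1 x) x ∂μ

variable [TopologicalSpace Y]

/-- `AC(X̄)`: adapted processes which are continuous and bounded. -/
def ACbdd {N : ℕ} (L : Fin N → (Fin N → Y) → ℝ) : Prop :=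
  (∀ t, Continuous (L t)) ∧ AdaptedProc L ∧ ∃ C : ℝ, ∀ t x, |L t x| ≤ C

/-- `AC_p(X̄)`: adapted continuous processes of growth of order `p`. -/
def ACp (p : ℝ) (d : Y → Y → ℝ≥0∞) {N : ℕ} (L : Fin N → (Fin N → Y) → ℝ) : Prop :=
  (∀ t, Continuous (L t)) ∧ AdaptedProc L ∧
    ∃ (C : ℝ) (x₀ : Fin N → Y), ∀ t x, |L t x| ≤ C * (1 + ((pathDist p d x₀ x) ^ p).toReal)

/-- The optimal stopping topology (weak version, bounded continuous rewards). -/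
def stopTopW (N : ℕ) : TopologicalSpace (Measure (Fin N → Y)) :=
  ⨅ L : {L : Fin N → (Fin N → Y) → ℝ // ACbdd L},
    TopologicalSpace.induced (stopVal L.1) inferInstance

/-- The `𝒲_p`-optimal stopping topology. -/
def stopTopWp (p : ℝ) (d : Y → Y → ℝ≥0∞) (N : ℕ) :
    TopologicalSpace (Measure (Fin N → Y)) :=
  ⨅ L : {L : Fin N → (Fin N → Y) → ℝ // ACp p d L},
    TopologicalSpace.induced (stopVal L.1) inferInstance

variable [PolishSpace Y] [BorelSpace Y] [Nonempty Y]

/-- Hellwig's map `I_t`, sending `μ` to the joint law of the first `t`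
coordinates together with the conditional law of the remaining coordinates. -/
def infoMap (N t : ℕ) (h : t ≤ N) (μ : Measure (Fin N → Y)) :
    Measure ((Fin t → Y) × Measure (Fin (N - t) → Y)) :=
  μ.map (fun x => (restr t h x,
    condK (μ.map (fun y => (restr t h y, tailr t h y))) (restr t h x)))

/-- Hellwig's information topology (weak version). -/
def infoTopW (N : ℕ) : TopologicalSpace (Measure (Fin N → Y)) :=
  ⨅ (t : ℕ) (_ : 1 ≤ t) (h : t ≤ N - 1),
    TopologicalSpace.induced (infoMap N t (le_trans h (Nat.sub_le N 1)))
      (weakTop (prodTop Pi.topologicalSpace (weakTop Pi.topologicalSpace)))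

/-- The `𝒲_p`-information topology. -/
def infoTopWp (p : ℝ) (d : Y → Y → ℝ≥0∞) (N : ℕ) :
    TopologicalSpace (Measure (Fin N → Y)) :=
  ⨅ (t : ℕ) (_ : 1 ≤ t) (h : t ≤ N - 1),
    TopologicalSpace.induced (infoMap N t (le_trans h (Nat.sub_le N 1)))
      (ballTop (Wp p (prodDist p (pathDist p d) (Wp p (pathDist p d)))))

/-- Aldous' prediction process `Z_t^μ` (as a function of the path). -/
def predict (N : ℕ) (μ : Measure (Fin N → Y)) (t : ℕ) (h : t ≤ N) :
    (Fin N → Y) → Measure (Fin N → Y) :=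
  fun x => condK (μ.map (fun y => (restr t h y, y))) (restr t h x)

/-- Aldous' map `E`, sending `μ` to the joint law of the path together with its
prediction process. -/
def aldousMap (N : ℕ) (μ : Measure (Fin N → Y)) :
    Measure ((Fin N → Y) × (Fin (N + 1) → Measure (Fin N → Y))) :=
  μ.map (fun x =>
    (x, fun t : Fin (N + 1) => predict N μ t.1 (Nat.lt_succ_iff.mp t.2) x))

/-- Aldous' extended weak topology. -/
def aldousTopW (N : ℕ) : TopologicalSpace (Measure (Fin N → Y)) :=
  TopologicalSpace.induced (aldousMap N)
    (weakTop (prodTop Pi.topologicalSpace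
      (@Pi.topologicalSpace (Fin (N + 1)) (fun _ => Measure (Fin N → Y))
        (fun _ => weakTop Pi.topologicalSpace))))

/-- The extended `𝒲_p`-topology. -/
def aldousTopWp (p : ℝ) (d : Y → Y → ℝ≥0∞) (N : ℕ) :
    TopologicalSpace (Measure (Fin N → Y)) :=
  TopologicalSpace.induced (aldousMap N)
    (ballTop (Wp p (prodDist p (pathDist p d)
      (fun Z Z' : Fin (N + 1) → Measure (Fin N → Y) =>
        (∑ t, Wp p (pathDist p d) (Z t) (Z' t) ^ p) ^ (1 / p)))))

end PathStructures

/-! ### The lifted two-time-point space `𝒳₁ × 𝒫_p(𝒳₂)` -/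

section Lifted

variable {A B : Type*} [MeasurableSpace A] [MeasurableSpace B]

/-- The nested distance on `𝒳₁ × 𝒫_p(𝒳₂)`. -/
def liftDist (p : ℝ) (dA : A → A → ℝ≥0∞) (dB : B → B → ℝ≥0∞) :
    (A × Measure B) → (A × Measure B) → ℝ≥0∞ :=
  fun u v => (dA u.1 v.1 ^ p + Wp p dB u.2 v.2 ^ p) ^ (1 / p)

/-- `η` is a version of the measure-valued conditional expectation
`E_γ[X̂₂ | Y⃗]` (i.e. the barycenter of a regular conditional law of `X̂₂`
given `Y⃗ = (Y₁, Ŷ₂)`). -/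
def IsCondBar (γ : Measure ((A × Measure B) × (A × Measure B)))
    (η : (A × Measure B) × (A × Measure B) → Measure B) : Prop :=
  (∃ g : (A × Measure B) → Measure B, Measurable g ∧ ∀ z, η z = g z.2) ∧
  (∀ z, IsProbabilityMeasure (η z)) ∧
  ∀ S : Set (A × Measure B), MeasurableSet S → ∀ E : Set B, MeasurableSet E →
    ∫⁻ z in {z | z.2 ∈ S}, η z E ∂γ = ∫⁻ z in {z | z.2 ∈ S}, z.1.2 E ∂γ

/-- `AW̄_p`, the `p`-Wasserstein distance on `𝒫_p(𝒳₁ × 𝒫_p(𝒳₂))`. -/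
def AWbar (p : ℝ) (dA : A → A → ℝ≥0∞) (dB : B → B → ℝ≥0∞)
    (μ ν : Measure (A × Measure B)) : ℝ≥0∞ :=
  Wp p (liftDist p dA dB) μ ν

/-- `CW̄_p`, the lifted causal Wasserstein "distance". -/
def CWbar (p : ℝ) (dA : A → A → ℝ≥0∞) (dB : B → B → ℝ≥0∞)
    (μ ν : Measure (A × Measure B)) : ℝ≥0∞ :=
  ⨅ γ ∈ Cpl μ ν, ⨅ η ∈ {η | IsCondBar γ η},
    (∫⁻ z, (dA z.1.1 z.2.1 ^ p + Wp p dB (η z) z.2.2 ^ p) ∂γ) ^ (1 / p)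

/-- `SCW̄_p`, the symmetrization of `CW̄_p`. -/
def SCWbar (p : ℝ) (dA : A → A → ℝ≥0∞) (dB : B → B → ℝ≥0∞)
    (μ ν : Measure (A × Measure B)) : ℝ≥0∞ :=
  max (CWbar p dA dB μ ν) (CWbar p dA dB ν μ)

/-- Membership in `𝒫_p(𝒳₁ × 𝒫_p(𝒳₂))`: a probability measure, concentrated on
`𝒳₁ × 𝒫_p(𝒳₂)`, with finite `p`-th moment for the nested distance. -/
def MemPpLift (p : ℝ) (dA : A → A → ℝ≥0∞) (dB : B → B → ℝ≥0∞)
    (μ : Measure (A × Measure B)) : Prop :=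
  IsProbabilityMeasure μ ∧ (∀ᵐ z ∂μ, MemPp p dB z.2) ∧
    ∃ z₀ : A × Measure B, MemPp p dB z₀.2 ∧ ∫⁻ z, liftDist p dA dB z₀ z ^ p ∂μ ≠ ∞

/-- Two-time-point causality: given a coupling `π` of measures on products
`A₁ × B₁` and `A₂ × B₂`, the conditional law of `Y₁` given `X = (X₁, X₂)`
coincides with the conditional law of `Y₁` given `X₁`. -/
def Causal2 {A₁ B₁ A₂ B₂ : Type*} [MeasurableSpace A₁] [MeasurableSpace B₁]
    [MeasurableSpace A₂] [MeasurableSpace B₂]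
    (π : Measure ((A₁ × B₁) × (A₂ × B₂))) : Prop :=
  ∀ S : Set A₂, MeasurableSet S →
    (π[fun z => S.indicator (fun _ => (1 : ℝ)) z.2.1 |
        MeasurableSpace.comap Prod.fst inferInstance])
      =ᵐ[π]
    (π[fun z => S.indicator (fun _ => (1 : ℝ)) z.2.1 |
        MeasurableSpace.comap (fun z => z.1.1) inferInstance])

/-- The two-time-point causal Wasserstein "distance" on `𝒫_p(𝒳₁ × 𝒳₂)`. -/
def CW2 (p : ℝ) (dA : A → A → ℝ≥0∞) (dB : B → B → ℝ≥0∞)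
    (μ ν : Measure (A × B)) : ℝ≥0∞ :=
  ⨅ π ∈ {π ∈ Cpl μ ν | Causal2 π},
    (∫⁻ z, (dA z.1.1 z.2.1 ^ p + dB z.1.2 z.2.2 ^ p) ∂π) ^ (1 / p)

end Lifted

lemma fin_duality {R : Type*} [Fintype R] (c : R → R → ℝ) (a b : R → ℝ)
    (ha : ∀ i, 0 ≤ a i) (hb : ∀ i, 0 ≤ b i) (ha1 : ∑ i, a i = 1) (hb1 : ∑ i, b i = 1) (v : ℝ)
    (hv : ∀ φ ψ : R → ℝ, (∀ i j, φ i + ψ j ≤ c i j) →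
      ∑ i, φ i * a i + ∑ j, ψ j * b j ≤ v) :
    ∃ q : R → R → ℝ, (∀ i j, 0 ≤ q i j) ∧ (∀ i, ∑ j, q i j = a i) ∧ (∀ j, ∑ i, q i j = b j) ∧
      ∑ i, ∑ j, c i j * q i j ≤ v := by
  classical
  let L : (R × R → ℝ) →ₗ[ℝ] ((R → ℝ) × (R → ℝ)) × ℝ :=
    { toFun := fun q => ((fun i => ∑ j, q (i, j), fun j => ∑ i, q (i, j)),
        ∑ i, ∑ j, c i j * q (i, j))
      map_add' := by
        intro x y
        ext <;> simp [Finset.sum_add_distrib, mul_add]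
      map_smul' := by
        intro r x
        ext <;> simp [Finset.mul_sum, mul_left_comm] }
  have hLc : Continuous L := L.continuous_of_finiteDimensional
  let K := L '' stdSimplex ℝ (R × R)
  have hKc : IsCompact K := (isCompact_stdSimplex ℝ (R × R)).image hLc
  have hKv : Convex ℝ K := (convex_stdSimplex ℝ (R × R)).linear_image L
  let t : Set (((R → ℝ) × (R → ℝ)) × ℝ) := {(a, b)} ×ˢ Set.Iic v
  have htc : IsClosed t := isClosed_singleton.prod isClosed_Iic
  have htv : Convex ℝ t := (convex_singleton _).prod (convex_Iic v)
  by_cases hd : Disjoint K t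
  · exfalso
    obtain ⟨f, u, v', h1, h2, h3⟩ := geometric_hahn_banach_compact_closed hKv hKc htv htc hd
    set A : R → ℝ := fun i => f ((Pi.single i 1, 0), 0) with hA
    set B : R → ℝ := fun i => f ((0, Pi.single i 1), 0) with hB
    set l : ℝ := f ((0, 0), 1) with hl
    have hf : ∀ x y r, f ((x, y), r) = ∑ i, A i * x i + ∑ j, B j * y j + l * r := by
      intro x y r
      have e : (((x, y), r) : ((R → ℝ) × (R → ℝ)) × ℝ) =
          ∑ i, x i • ((Pi.single i 1, 0), 0) + ∑ i, y i • ((0, Pi.single i 1), 0)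
            + r • ((0, 0), 1) := by
        ext i
        · simp [Prod.fst_sum, Finset.sum_apply, Pi.single_apply]
        · simp [Prod.fst_sum, Prod.snd_sum, Finset.sum_apply, Pi.single_apply]
        · simp [Prod.snd_sum]
      rw [e]
      simp only [map_add, map_sum, map_smul, smul_eq_mul, hA, hB, hl]
      simp only [mul_comm]
    have hK : ∀ i j, A i + B j + l * c i j < u := by
      intro i j
      have := h1 (L (Pi.single (i, j) 1)) ⟨_, single_mem_stdSimplex ℝ (i, j), rfl⟩
      have e : L (Pi.single (i, j) 1) = ((Pi.single i 1, Pi.single j 1), c i j) := by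
        ext k
        · by_cases h : k = i
          · simp [L, Pi.single_apply, h, Prod.ext_iff]
            exact Finset.card_eq_one.2 ⟨j, by ext; simp⟩
          · simp [L, Pi.single_apply, h, Prod.ext_iff]
        · by_cases h : k = j
          · simp [L, Pi.single_apply, h, Prod.ext_iff]
            exact Finset.card_eq_one.2 ⟨i, by ext; simp⟩
          · simp [L, Pi.single_apply, h, Prod.ext_iff]
        · simp only [L, Pi.single_apply, Prod.ext_iff, LinearMap.coe_mk, AddHom.coe_mk]
          rw [Finset.sum_eq_single i, Finset.sum_eq_single j] <;> simp +contextual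
      rw [e, hf] at this
      simpa [Pi.single_apply] using this
    have ht : ∀ r ≤ v, u < ∑ i, A i * a i + ∑ j, B j * b j + l * r := by
      intro r hr
      have := h3 ((a, b), r) ⟨rfl, hr⟩
      rw [hf] at this
      linarith
    set s := ∑ i, A i * a i + ∑ j, B j * b j with hs
    have hl0 : l ≤ 0 := by
      by_contra! hpos
      have := ht (min v ((u - s) / l)) (min_le_left _ _)
      have h5 : l * min v ((u - s) / l) ≤ l * ((u - s) / l) :=
        mul_le_mul_of_nonneg_left (min_le_right _ _) hpos.le
      rw [mul_div_cancel₀ _ hpos.ne'] at h5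
      linarith
    rcases hl0.lt_or_eq with hl0 | hl0
    · have := hv (fun i => (A i - u) / (-l)) (fun j => B j / (-l)) (by
        intro i j
        rw [← add_div, div_le_iff₀ (by linarith)]
        have := hK i j
        nlinarith)
      have e : ∑ i, (A i - u) / (-l) * a i + ∑ j, B j / (-l) * b j = (s - u) / (-l) := by
        have e1 : ∀ i, (A i - u) / (-l) * a i = (A i * a i - u * a i) / (-l) := by
          intro i; ring
        have e2 : ∀ i, B i / (-l) * b i = (B i * b i) / (-l) := by
          intro i; ring
        simp only [e1, e2, ← Finset.sum_div, Finset.sum_sub_distrib, ← Finset.mul_sum, ha1]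
        rw [← add_div, hs]; ring
      rw [e, div_le_iff₀ (by linarith)] at this
      have := ht v le_rfl
      linarith
    · have h6 : s = ∑ i, ∑ j, (A i + B j) * (a i * b j) := by
        have : ∀ i, ∑ j, (A i + B j) * (a i * b j) = A i * a i + a i * ∑ j, B j * b j := by
          intro i
          rw [Finset.mul_sum]
          calc _ = ∑ j, (A i * a i * b j + a i * (B j * b j)) := by
                refine Finset.sum_congr rfl fun j _ => by ring
            _ = _ := by rw [Finset.sum_add_distrib, ← Finset.mul_sum, hb1, mul_one]
        simp only [this, Finset.sum_add_distrib, ← Finset.sum_mul, ha1, one_mul, hs]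
      have h7 : ∑ i, ∑ j, (A i + B j) * (a i * b j) ≤ ∑ i, ∑ j, u * (a i * b j) := by
        refine Finset.sum_le_sum fun i _ => Finset.sum_le_sum fun j _ => ?_
        refine mul_le_mul_of_nonneg_right ?_ (mul_nonneg (ha i) (hb j))
        have := hK i j
        rw [hl0] at this; linarith
      have h8 : ∑ i, ∑ j, u * (a i * b j) = u := by
        simp only [← Finset.mul_sum, hb1, ha1, mul_one]
      have := ht v le_rfl
      rw [hl0] at this
      linarith
  · rw [Set.not_disjoint_iff] at hd
    obtain ⟨_, ⟨q, hq, rfl⟩, h2⟩ := hd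
    have h3 : L q ∈ t := h2
    obtain ⟨h3, h4⟩ := h3
    have h3' : (L q).1 = (a, b) := h3
    refine ⟨fun i j => q (i, j), fun i j => hq.1 _, fun i => ?_, fun j => ?_, h4⟩
    · exact congrFun (congrArg Prod.fst h3') i
    · exact congrFun (congrArg Prod.snd h3') j

def hk {X R : Type*} [MeasurableSpace X] [Fintype R] (t : X → R) (φ ψ : R → ℝ)
    (m n : Measure X) : ℝ :=
  ∑ i, φ i * m.real (t ⁻¹' {i}) + ∑ j, ψ j * n.real (t ⁻¹' {j})

def Feas {R : Type*} (c : R → R → ℝ) : Type _ :=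
  {w : (R → ℚ) × (R → ℚ) // ∀ i j, (w.1 i : ℝ) + w.2 j ≤ c i j}

instance {R : Type*} [Finite R] (c : R → R → ℝ) : Countable (Feas c) := by
  unfold Feas; infer_instance

def FF {X R : Type*} [MeasurableSpace X] [Fintype R] (t : X → R) (c : R → R → ℝ)
    (m n : Measure X) : ℝ≥0∞ :=
  ⨆ w : Feas c, ENNReal.ofReal (hk t (fun i => w.1.1 i) (fun i => w.1.2 i) m n)

section FFsec

variable {X R : Type*} [MeasurableSpace X] [Fintype R] [MeasurableSpace R]
  [MeasurableSingletonClass R]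

lemma measurable_hk {t : X → R} (ht : Measurable t) (φ ψ : R → ℝ) :
    Measurable (fun z : Measure X × Measure X => hk t φ ψ z.1 z.2) := by
  have h : ∀ i, Measurable (fun m : Measure X => m.real (t ⁻¹' {i})) := fun i =>
    (Measure.measurable_coe (ht (measurableSet_singleton i))).ennreal_toReal
  unfold hk
  refine Measurable.add ?_ ?_
  · exact Finset.measurable_sum _ fun i _ => ((h i).comp measurable_fst).const_mul _
  · exact Finset.measurable_sum _ fun i _ => ((h i).comp measurable_snd).const_mul _

lemma measurable_FF {t : X → R} (ht : Measurable t) (c : R → R → ℝ) :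
    Measurable (fun z : Measure X × Measure X => FF t c z.1 z.2) :=
  Measurable.iSup fun _ => (measurable_hk ht _ _).ennreal_ofReal

lemma sum_real_preimage {t : X → R} (ht : Measurable t) (m : Measure X)
    [IsProbabilityMeasure m] : ∑ i, m.real (t ⁻¹' {i}) = 1 := by
  have h : ∀ i, m.real (t ⁻¹' {i}) = (m.map t).real {i} := fun i => by
    rw [map_measureReal_apply ht (measurableSet_singleton i)]
  have := Measure.isProbabilityMeasure_map (μ := m) ht.aemeasurable
  simp only [h]
  rw [sum_measureReal_singleton]; simp

lemma isProb_of_cpl {m n : Measure X} [hm : IsProbabilityMeasure m] {π : Measure (X × X)}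
    (hπ : π ∈ Cpl m n) : IsProbabilityMeasure π := by
  constructor
  have := congrArg (fun m => m Set.univ) hπ.1
  simpa [Measure.map_apply measurable_fst] using this

lemma FF_le {t : X → R} (ht : Measurable t) {c : R → R → ℝ} (hc : ∀ i j, 0 ≤ c i j)
    {m n : Measure X} [IsProbabilityMeasure m] {π : Measure (X × X)} (hπ : π ∈ Cpl m n) :
    FF t c m n ≤ ∫⁻ z, ENNReal.ofReal (c (t z.1) (t z.2)) ∂π := by
  have := isProb_of_cpl hπ
  have htt : Measurable (fun z : X × X => (t z.1, t z.2)) := by fun_prop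
  set Q := π.map (fun z : X × X => (t z.1, t z.2)) with hQ
  have hQp : IsProbabilityMeasure Q := Measure.isProbabilityMeasure_map htt.aemeasurable
  have hm1 : ∀ i, m.real (t ⁻¹' {i}) = ∑ j, Q.real {(i, j)} := by
    intro i
    classical
    rw [show ∑ j, Q.real {(i, j)} = ∑ x ∈ Finset.univ.image (fun j => (i, j)), Q.real {x} by
      rw [Finset.sum_image (by intro a _ b _ h; simpa using h)]]
    rw [sum_measureReal_singleton, hQ,
      map_measureReal_apply htt (Finset.measurableSet _), ← hπ.1,
      map_measureReal_apply measurable_fst (ht (measurableSet_singleton i))]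
    congr 1
    ext z; simp [eq_comm]
  have hn1 : ∀ j, n.real (t ⁻¹' {j}) = ∑ i, Q.real {(i, j)} := by
    intro i
    classical
    rw [show ∑ j, Q.real {(j, i)} = ∑ x ∈ Finset.univ.image (fun j => (j, i)), Q.real {x} by
      rw [Finset.sum_image (by intro a _ b _ h; simpa using h)]]
    rw [sum_measureReal_singleton, hQ,
      map_measureReal_apply htt (Finset.measurableSet _), ← hπ.2,
      map_measureReal_apply measurable_snd (ht (measurableSet_singleton i))]
    congr 1
    ext z; simp [eq_comm]
  have hI : ∫⁻ z, ENNReal.ofReal (c (t z.1) (t z.2)) ∂π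
      = ENNReal.ofReal (∑ i, ∑ j, c i j * Q.real {(i, j)}) := by
    have : Measurable (fun x : R × R => ENNReal.ofReal (c x.1 x.2)) := measurable_of_countable _
    rw [← lintegral_map this htt, ← hQ, lintegral_fintype, Fintype.sum_prod_type,
      ENNReal.ofReal_sum_of_nonneg
        (fun i _ => Finset.sum_nonneg fun j _ => mul_nonneg (hc i j) measureReal_nonneg)]
    refine Finset.sum_congr rfl fun i _ => ?_
    rw [ENNReal.ofReal_sum_of_nonneg (fun j _ => mul_nonneg (hc i j) measureReal_nonneg)]
    refine Finset.sum_congr rfl fun j _ => ?_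
    rw [ENNReal.ofReal_mul (hc i j), ofReal_measureReal]
  rw [hI]
  refine iSup_le fun w => ENNReal.ofReal_le_ofReal ?_
  unfold hk
  simp only [hm1, hn1, Finset.mul_sum]
  rw [Finset.sum_comm (f := fun j i => (w.1.2 j : ℝ) * Q.real {(i, j)}), ← Finset.sum_add_distrib]
  refine Finset.sum_le_sum fun i _ => ?_
  rw [← Finset.sum_add_distrib]
  refine Finset.sum_le_sum fun j _ => ?_
  rw [← add_mul]
  exact mul_le_mul_of_nonneg_right (w.2 i j) measureReal_nonneg

lemma FF_lt_top {t : X → R} (ht : Measurable t) {c : R → R → ℝ} (hc : ∀ i j, 0 ≤ c i j)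
    {m n : Measure X} [IsProbabilityMeasure m] [IsProbabilityMeasure n] :
    FF t c m n ≤ ENNReal.ofReal (∑ i, ∑ j, c i j) := by
  refine (FF_le ht hc (π := m.prod n) ⟨by simp, by simp⟩).trans ?_
  calc _ ≤ ∫⁻ z, ENNReal.ofReal (∑ i, ∑ j, c i j) ∂(m.prod n) := by
        refine lintegral_mono fun z => ENNReal.ofReal_le_ofReal ?_
        refine (Finset.single_le_sum (f := fun j => c (t z.1) j) (fun j _ => hc _ _)
          (Finset.mem_univ (t z.2))).trans ?_
        exact Finset.single_le_sum (f := fun i => ∑ j, c i j)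
          (fun i _ => Finset.sum_nonneg fun j _ => hc _ _) (Finset.mem_univ (t z.1))
    _ = _ := by simp

lemma exists_cpl_le_FF {t : X → R} (ht : Measurable t) {c : R → R → ℝ} (hc : ∀ i j, 0 ≤ c i j)
    {m n : Measure X} [IsProbabilityMeasure m] [IsProbabilityMeasure n] :
    ∃ π ∈ Cpl m n, ∫⁻ z, ENNReal.ofReal (c (t z.1) (t z.2)) ∂π ≤ FF t c m n := by
  have hfin : FF t c m n ≠ ∞ := ((FF_lt_top ht hc).trans_lt ENNReal.ofReal_lt_top).ne
  obtain ⟨q, hq0, hq1, hq2, hq3⟩ := fin_duality c (fun i => m.real (t ⁻¹' {i}))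
    (fun i => n.real (t ⁻¹' {i})) (fun _ => measureReal_nonneg) (fun _ => measureReal_nonneg)
    (sum_real_preimage ht m) (sum_real_preimage ht n) (FF t c m n).toReal (by
      intro φ ψ h
      refine le_of_forall_pos_le_add fun ε hε => ?_
      have hr : ∀ x : ℝ, ∃ r : ℚ, x - ε / 2 < r ∧ (r : ℝ) < x := fun x =>
        exists_rat_btwn (by linarith)
      choose r hr1 hr2 using hr
      let w : Feas c := ⟨(fun i => r (φ i), fun i => r (ψ i)), fun i j => by
        have := h i j; have := hr2 (φ i); have := hr2 (ψ j)
        simp only; linarith⟩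
      have h1 : hk t (fun i => w.1.1 i) (fun i => w.1.2 i) m n ≤ (FF t c m n).toReal := by
        rw [← ENNReal.ofReal_le_iff_le_toReal hfin]
        exact le_iSup (fun w : Feas c =>
          ENNReal.ofReal (hk t (fun i => w.1.1 i) (fun i => w.1.2 i) m n)) w
      have h2 : ∀ (m : Measure X) [IsProbabilityMeasure m] (φ : R → ℝ),
          ∑ i, φ i * m.real (t ⁻¹' {i}) ≤ ∑ i, (r (φ i) : ℝ) * m.real (t ⁻¹' {i}) + ε / 2 := by
        intro m _ φ
        calc _ ≤ ∑ i, ((r (φ i) : ℝ) * m.real (t ⁻¹' {i}) + ε / 2 * m.real (t ⁻¹' {i})) := by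
              refine Finset.sum_le_sum fun i _ => ?_
              rw [← add_mul]
              refine mul_le_mul_of_nonneg_right ?_ measureReal_nonneg
              linarith [hr1 (φ i)]
          _ = _ := by rw [Finset.sum_add_distrib, ← Finset.mul_sum, sum_real_preimage ht, mul_one]
      have h3 := h2 m φ
      have h4 := h2 n ψ
      have h5 : hk t (fun i => w.1.1 i) (fun i => w.1.2 i) m n =
        ∑ i, (r (φ i) : ℝ) * m.real (t ⁻¹' {i}) + ∑ i, (r (ψ i) : ℝ) * n.real (t ⁻¹' {i}) := rfl
      linarith)
  have hA : ∀ i, MeasurableSet (t ⁻¹' {i}) := fun i => ht (measurableSet_singleton i)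
  let W : R → R → ℝ≥0∞ := fun i j =>
    ENNReal.ofReal (q i j) / (m (t ⁻¹' {i}) * n (t ⁻¹' {j}))
  have hW : ∀ i j, W i j * (m (t ⁻¹' {i}) * n (t ⁻¹' {j})) = ENNReal.ofReal (q i j) := by
    intro i j
    by_cases h0 : m (t ⁻¹' {i}) * n (t ⁻¹' {j}) = 0
    · have : q i j = 0 := by
        rcases mul_eq_zero.1 h0 with h | h
        · have h1 : ∑ j, q i j = 0 := by rw [hq1]; simp [Measure.real, h]
          exact (Finset.sum_eq_zero_iff_of_nonneg fun j _ => hq0 i j).1 h1 j (Finset.mem_univ _)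
        · have h1 : ∑ i, q i j = 0 := by rw [hq2]; simp [Measure.real, h]
          exact (Finset.sum_eq_zero_iff_of_nonneg fun i _ => hq0 i j).1 h1 i (Finset.mem_univ _)
      simp [h0, this]
    · exact ENNReal.div_mul_cancel h0
        (ENNReal.mul_ne_top (measure_ne_top _ _) (measure_ne_top _ _))
  have hdec : ∀ (m : Measure X) (S : Set X), MeasurableSet S →
      ∑ i, m (S ∩ t ⁻¹' {i}) = m S := by
    intro m S hS
    rw [← measure_biUnion_finset]
    · congr 1; ext x; simp
    · intro i _ j _ hij
      rw [Function.onFun, Set.disjoint_left]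
      rintro x ⟨_, h1⟩ ⟨_, h2⟩
      exact hij (h1.symm.trans h2)
    · exact fun i _ => hS.inter (hA i)
  have hWm : ∀ i, m (t ⁻¹' {i}) ≠ 0 → ∑ j, W i j * n (t ⁻¹' {j}) = 1 := by
    intro i hi
    have h1 : (∑ j, W i j * n (t ⁻¹' {j})) * m (t ⁻¹' {i}) = 1 * m (t ⁻¹' {i}) := by
      have h2 : ∑ j, ENNReal.ofReal (q i j) = m (t ⁻¹' {i}) := by
        rw [← ENNReal.ofReal_sum_of_nonneg fun j _ => hq0 i j, hq1, ofReal_measureReal]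
      rw [Finset.sum_mul, one_mul]
      refine Eq.trans (Finset.sum_congr rfl fun j _ => ?_) h2
      rw [← hW]; ring
    exact (ENNReal.mul_left_inj hi (measure_ne_top _ _)).1 h1
  have hWn : ∀ j, n (t ⁻¹' {j}) ≠ 0 → ∑ i, W i j * m (t ⁻¹' {i}) = 1 := by
    intro i hi
    have h1 : (∑ j, W j i * m (t ⁻¹' {j})) * n (t ⁻¹' {i}) = 1 * n (t ⁻¹' {i}) := by
      have h2 : ∑ j, ENNReal.ofReal (q j i) = n (t ⁻¹' {i}) := by
        rw [← ENNReal.ofReal_sum_of_nonneg fun j _ => hq0 j i, hq2, ofReal_measureReal]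
      rw [Finset.sum_mul, one_mul]
      refine Eq.trans (Finset.sum_congr rfl fun j _ => ?_) h2
      rw [← hW]; ring
    exact (ENNReal.mul_left_inj hi (measure_ne_top _ _)).1 h1
  let π : Measure (X × X) :=
    ∑ i, ∑ j, W i j • (m.restrict (t ⁻¹' {i})).prod (n.restrict (t ⁻¹' {j}))
  refine ⟨π, ⟨?_, ?_⟩, ?_⟩
  · ext S hS
    rw [Measure.map_apply measurable_fst hS, ← Set.prod_univ]
    simp only [π, Measure.finsetSum_apply, Measure.smul_apply, Measure.prod_prod, smul_eq_mul,
      Measure.restrict_apply hS, Measure.restrict_apply MeasurableSet.univ, Set.univ_inter]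
    rw [← hdec m S hS]
    refine Finset.sum_congr rfl fun i _ => ?_
    by_cases h0 : m (t ⁻¹' {i}) = 0
    · have : m (S ∩ t ⁻¹' {i}) = 0 := measure_mono_null Set.inter_subset_right h0
      simp [this]
    · refine Eq.trans ?_ (one_mul _)
      rw [← hWm i h0, Finset.sum_mul]
      exact Finset.sum_congr rfl fun j _ => by ring
  · ext S hS
    rw [Measure.map_apply measurable_snd hS, ← Set.univ_prod]
    simp only [π, Measure.finsetSum_apply, Measure.smul_apply, Measure.prod_prod, smul_eq_mul,
      Measure.restrict_apply hS, Measure.restrict_apply MeasurableSet.univ, Set.univ_inter]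
    rw [← hdec n S hS, Finset.sum_comm]
    refine Finset.sum_congr rfl fun i _ => ?_
    by_cases h0 : n (t ⁻¹' {i}) = 0
    · have : n (S ∩ t ⁻¹' {i}) = 0 := measure_mono_null Set.inter_subset_right h0
      simp [this]
    · refine Eq.trans ?_ (one_mul _)
      rw [← hWn i h0, Finset.sum_mul]
      exact Finset.sum_congr rfl fun j _ => by ring
  · have hterm : ∀ i j, ∫⁻ z, ENNReal.ofReal (c (t z.1) (t z.2))
        ∂(m.restrict (t ⁻¹' {i})).prod (n.restrict (t ⁻¹' {j})) =
        ENNReal.ofReal (c i j) * (m (t ⁻¹' {i}) * n (t ⁻¹' {j})) := by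
      intro i j
      rw [Measure.prod_restrict, ← Measure.prod_prod, ← setLIntegral_const]
      refine setLIntegral_congr_fun ((hA i).prod (hA j)) ?_
      rintro z ⟨h1, h2⟩
      simp only [Set.mem_preimage, Set.mem_singleton_iff] at h1 h2
      simp [h1, h2]
    simp only [π, lintegral_finsetSum_measure, lintegral_smul_measure, hterm, smul_eq_mul]
    rw [← ENNReal.ofReal_toReal hfin]
    refine le_trans (le_of_eq ?_) (ENNReal.ofReal_le_ofReal hq3)
    rw [ENNReal.ofReal_sum_of_nonneg
        (fun i _ => Finset.sum_nonneg fun j _ => mul_nonneg (hc i j) (hq0 i j))]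
    refine Finset.sum_congr rfl fun i _ => ?_
    rw [ENNReal.ofReal_sum_of_nonneg (fun j _ => mul_nonneg (hc i j) (hq0 i j))]
    refine Finset.sum_congr rfl fun j _ => ?_
    rw [ENNReal.ofReal_mul (hc i j), ← hW i j]; ring

end FFsec

lemma lp_mink3 {Z : Type*} [MeasurableSpace Z] {P : Measure Z} {p : ℝ} (hp : 1 ≤ p)
    {f u v w : Z → ℝ≥0∞} (hu : AEMeasurable u P) (hv : AEMeasurable v P) (hw : AEMeasurable w P)
    (h : ∀ᵐ z ∂P, f z ≤ u z + v z + w z) :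
    (∫⁻ z, f z ^ p ∂P) ^ (1 / p) ≤ (∫⁻ z, u z ^ p ∂P) ^ (1 / p) +
      (∫⁻ z, v z ^ p ∂P) ^ (1 / p) + (∫⁻ z, w z ^ p ∂P) ^ (1 / p) := by
  have hp0 : 0 ≤ p := by linarith
  have hp1 : 0 ≤ 1 / p := by positivity
  calc _ ≤ (∫⁻ z, ((u + v) + w) z ^ p ∂P) ^ (1 / p) := by
        refine ENNReal.rpow_le_rpow (lintegral_mono_ae ?_) hp1
        filter_upwards [h] with z hz
        exact ENNReal.rpow_le_rpow hz hp0
    _ ≤ _ := (ENNReal.lintegral_Lp_add_le (hu.add hv) hw hp).trans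
        (add_le_add_left (ENNReal.lintegral_Lp_add_le hu hv hp) _)

/-- `L^p` size of the displacement of the map `T` under `m`. -/
def EE {X : Type*} [MetricSpace X] [MeasurableSpace X] (p : ℝ) (T : X → X) (m : Measure X) :
    ℝ≥0∞ := (∫⁻ x, edist x (T x) ^ p ∂m) ^ (1 / p)

section Wsec

variable {X R : Type*} [MetricSpace X] [SecondCountableTopology X] [MeasurableSpace X]
  [BorelSpace X] [Fintype R] [MeasurableSpace R] [MeasurableSingletonClass R]

def cc (p : ℝ) (s : R → X) : R → R → ℝ := fun i j => dist (s i) (s j) ^ p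


lemma cc_nonneg {X R : Type*} [MetricSpace X] (p : ℝ) (s : R → X) (i j : R) :
    0 ≤ cc p s i j := Real.rpow_nonneg dist_nonneg _

lemma ofReal_cc {X R : Type*} [MetricSpace X] {p : ℝ} (hp : 1 ≤ p) (s : R → X) (i j : R) :
    ENNReal.ofReal (cc p s i j) = edist (s i) (s j) ^ p := by
  rw [cc, edist_dist, ENNReal.ofReal_rpow_of_nonneg dist_nonneg (by linarith)]

lemma Wp_le_FF {p : ℝ} (hp : 1 ≤ p) {t : X → R} (ht : Measurable t) (s : R → X)
    (m n : Measure X) [IsProbabilityMeasure m] [IsProbabilityMeasure n] :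
    Wp p edist m n ≤ EE p (fun x => s (t x)) m + FF t (cc p s) m n ^ (1 / p)
      + EE p (fun x => s (t x)) n := by
  have hp1 : 0 ≤ 1 / p := by positivity
  obtain ⟨π, hπ, hle⟩ := exists_cpl_le_FF ht (cc_nonneg p s) (m := m) (n := n)
  have hT : Measurable (fun x => s (t x)) := (measurable_of_countable s).comp ht
  have hE : Measurable (fun x => edist x (s (t x))) := measurable_id.edist hT
  simp only [ofReal_cc hp] at hle
  refine (iInf₂_le π hπ).trans ((lp_mink3 hp (u := fun z => edist z.1 (s (t z.1)))
    (v := fun z => edist (s (t z.1)) (s (t z.2))) (w := fun z => edist z.2 (s (t z.2)))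
    (hE.comp measurable_fst).aemeasurable
    ((hT.comp measurable_fst).edist (hT.comp measurable_snd)).aemeasurable
    (hE.comp measurable_snd).aemeasurable (ae_of_all _ fun z => ?_)).trans ?_)
  · rw [edist_comm z.2]
    exact edist_triangle4 _ _ _ _
  · refine add_le_add (add_le_add ?_ (ENNReal.rpow_le_rpow hle hp1)) ?_
    · rw [EE, ← hπ.1, lintegral_map (by fun_prop) measurable_fst]
    · rw [EE, ← hπ.2, lintegral_map (by fun_prop) measurable_snd]

lemma FF_sub_le_Wp {p : ℝ} (hp : 1 ≤ p) {t : X → R} (ht : Measurable t) (s : R → X)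
    (m n : Measure X) [IsProbabilityMeasure m] :
    FF t (cc p s) m n ^ (1 / p) - (EE p (fun x => s (t x)) m + EE p (fun x => s (t x)) n)
      ≤ Wp p edist m n := by
  have hp1 : 0 ≤ 1 / p := by positivity
  refine le_iInf₂ fun π hπ => ?_
  rw [tsub_le_iff_right]
  have hT : Measurable (fun x => s (t x)) := (measurable_of_countable s).comp ht
  have hE : Measurable (fun x => edist x (s (t x))) := measurable_id.edist hT
  have h1 := FF_le ht (cc_nonneg p s) hπ
  simp only [ofReal_cc hp] at h1
  refine (ENNReal.rpow_le_rpow h1 hp1).trans ((lp_mink3 hp (u := fun z => edist z.1 (s (t z.1)))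
    (v := fun z => edist z.1 z.2) (w := fun z => edist z.2 (s (t z.2)))
    (hE.comp measurable_fst).aemeasurable
    measurable_edist.aemeasurable
    (hE.comp measurable_snd).aemeasurable (ae_of_all _ fun z => ?_)).trans ?_)
  · rw [edist_comm z.1 (s _)]
    exact edist_triangle4 _ _ _ _
  · have e1 : (∫⁻ z, edist z.1 (s (t z.1)) ^ p ∂π) ^ (1 / p) = EE p (fun x => s (t x)) m := by
      rw [EE, ← hπ.1, lintegral_map (by fun_prop) measurable_fst]
    have e2 : (∫⁻ z, edist z.2 (s (t z.2)) ^ p ∂π) ^ (1 / p) = EE p (fun x => s (t x)) n := by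
      rw [EE, ← hπ.2, lintegral_map (by fun_prop) measurable_snd]
    rw [e1, e2]
    exact le_of_eq (by ring)


/-- Existence of good finite quantizations. -/
lemma exists_quant {p : ℝ} (hp : 1 ≤ p) (M : Measure X) (x0 : X)
    (hM : ∫⁻ x, edist x0 x ^ p ∂M ≠ ∞) {ε : ℝ≥0∞} (hε : 0 < ε) :
    ∃ T : SimpleFunc X X, ∫⁻ x, edist x (T x) ^ p ∂M ≤ ε := by
  have hp0 : 0 < p := by linarith
  let T : ℕ → SimpleFunc X X := fun k =>
    SimpleFunc.approxOn (fun x => x) measurable_id Set.univ x0 (Set.mem_univ _) k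
  have hlim : Tendsto (fun k => ∫⁻ x, edist x (T k x) ^ p ∂M) atTop (𝓝 (∫⁻ _, 0 ∂M)) := by
    refine tendsto_lintegral_of_dominated_convergence (fun x => edist x0 x ^ p) ?_ ?_ hM ?_
    · intro k
      exact (measurable_id.edist (T k).measurable).pow_const _
    · intro k
      refine ae_of_all _ fun x => ENNReal.rpow_le_rpow ?_ hp0.le
      rw [edist_comm]
      exact SimpleFunc.edist_approxOn_le (f := fun x : X => x) measurable_id (Set.mem_univ _) x k
    · refine ae_of_all _ fun x => ?_
      have h1 : Tendsto (fun k => T k x) atTop (𝓝 x) :=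
        SimpleFunc.tendsto_approxOn (f := fun x : X => x) measurable_id (Set.mem_univ x0) (by simp)
      have h2 : Tendsto (fun k => edist x (T k x)) atTop (𝓝 (edist x x)) :=
        tendsto_const_nhds.edist h1
      have h3 := (ENNReal.continuous_rpow_const (y := p)).continuousAt.tendsto.comp h2
      simpa [Function.comp_def, ENNReal.zero_rpow_of_pos hp0] using h3
  rw [lintegral_zero] at hlim
  obtain ⟨k, hk⟩ := (hlim.eventually (ge_mem_nhds hε)).exists
  exact ⟨T k, hk⟩

end Wsec

lemma ofReal_integral_le_lint {Z : Type*} [MeasurableSpace Z] {P : Measure Z} {f : Z → ℝ}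
    (hf : Integrable f P) : ENNReal.ofReal (∫ z, f z ∂P) ≤ ∫⁻ z, ENNReal.ofReal (f z) ∂P := by
  rw [integral_eq_lintegral_pos_part_sub_lintegral_neg_part hf]
  refine (ENNReal.ofReal_le_ofReal (sub_le_self _ ENNReal.toReal_nonneg)).trans ?_
  exact ENNReal.ofReal_toReal_le

section Cond

variable {A B R : Type*} [MeasurableSpace A] [MeasurableSpace B] [Fintype R] [MeasurableSpace R]
  [MeasurableSingletonClass R]

lemma integrable_real_meas {Z : Type*} [MeasurableSpace Z] {P : Measure Z} [IsFiniteMeasure P]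
    {κ : Z → Measure B} (hκ : Measurable κ) (hp : ∀ᵐ z ∂P, IsProbabilityMeasure (κ z))
    {E : Set B} (hE : MeasurableSet E) : Integrable (fun z => (κ z).real E) P := by
  refine Integrable.of_bound
    (((Measure.measurable_coe hE).comp hκ).ennreal_toReal.aestronglyMeasurable) 1 ?_
  filter_upwards [hp] with z hz
  rw [Real.norm_of_nonneg measureReal_nonneg]
  exact measureReal_le_one

lemma integrable_hk {Z : Type*} [MeasurableSpace Z] {P : Measure Z} [IsFiniteMeasure P]
    {κ κ' : Z → Measure B} (hκ : Measurable κ) (hp : ∀ᵐ z ∂P, IsProbabilityMeasure (κ z))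
    (hκ' : Measurable κ') (hp' : ∀ᵐ z ∂P, IsProbabilityMeasure (κ' z))
    {t : B → R} (ht : Measurable t) (φ ψ : R → ℝ) :
    Integrable (fun z => hk t φ ψ (κ z) (κ' z)) P := by
  have hA : ∀ i, MeasurableSet (t ⁻¹' {i}) := fun i => ht (measurableSet_singleton i)
  unfold hk
  exact (integrable_finsetSum _ fun i _ => (integrable_real_meas hκ hp (hA i)).const_mul _).add
    (integrable_finsetSum _ fun i _ => (integrable_real_meas hκ' hp' (hA i)).const_mul _)

lemma integral_hk_eq {Z : Type*} [MeasurableSpace Z] {P : Measure Z} [IsFiniteMeasure P]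
    {η κ κ' : Z → Measure B} (hη : Measurable η) (hpη : ∀ᵐ z ∂P, IsProbabilityMeasure (η z))
    (hκ : Measurable κ) (hp : ∀ᵐ z ∂P, IsProbabilityMeasure (κ z))
    (hκ' : Measurable κ') (hp' : ∀ᵐ z ∂P, IsProbabilityMeasure (κ' z))
    {t : B → R} (ht : Measurable t) (φ ψ : R → ℝ)
    (h : ∀ E, MeasurableSet E → ∫⁻ z, η z E ∂P = ∫⁻ z, κ z E ∂P) :
    ∫ z, hk t φ ψ (η z) (κ' z) ∂P = ∫ z, hk t φ ψ (κ z) (κ' z) ∂P := by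
  have hA : ∀ i, MeasurableSet (t ⁻¹' {i}) := fun i => ht (measurableSet_singleton i)
  have key : ∀ i, ∫ z, (η z).real (t ⁻¹' {i}) ∂P = ∫ z, (κ z).real (t ⁻¹' {i}) ∂P := by
    intro i
    unfold Measure.real
    rw [integral_toReal, integral_toReal, h _ (hA i)]
    · exact ((Measure.measurable_coe (hA i)).comp hκ).aemeasurable
    · filter_upwards [hp] with z hz using measure_lt_top _ _
    · exact ((Measure.measurable_coe (hA i)).comp hη).aemeasurable
    · filter_upwards [hpη] with z hz using measure_lt_top _ _
  unfold hk
  have i1 := fun i => (integrable_real_meas hη hpη (hA i)).const_mul (φ i)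
  have i2 := fun i => (integrable_real_meas hκ hp (hA i)).const_mul (φ i)
  have i3 := fun i => (integrable_real_meas hκ' hp' (hA i)).const_mul (ψ i)
  rw [integral_add (integrable_finsetSum _ fun i _ => i1 i) (integrable_finsetSum _ fun i _ => i3 i),
    integral_add (integrable_finsetSum _ fun i _ => i2 i) (integrable_finsetSum _ fun i _ => i3 i),
    integral_finsetSum _ (fun i _ => i1 i), integral_finsetSum _ (fun i _ => i2 i)]
  simp only [integral_const_mul, key]

lemma measurable_FF_comp {Z : Type*} [MeasurableSpace Z] {t : B → R} (ht : Measurable t)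
    (c : R → R → ℝ) {κ κ' : Z → Measure B} (hκ : Measurable κ) (hκ' : Measurable κ') :
    Measurable (fun z => FF t c (κ z) (κ' z)) := by
  have h1 := (measurable_FF ht c)
  have h2 := hκ.prodMk hκ'
  have h3 := h1.comp h2
  exact h3

lemma measurable_hk_comp {Z : Type*} [MeasurableSpace Z] {t : B → R} (ht : Measurable t)
    (φ ψ : R → ℝ) {κ κ' : Z → Measure B} (hκ : Measurable κ) (hκ' : Measurable κ') :
    Measurable (fun z => hk t φ ψ (κ z) (κ' z)) := by
  have h1 := (measurable_hk ht φ ψ)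
  have h2 := hκ.prodMk hκ'
  have h3 := h1.comp h2
  exact h3

lemma lintegral_FF_le {γ : Measure ((A × Measure B) × (A × Measure B))} [IsProbabilityMeasure γ]
    {η : (A × Measure B) × (A × Measure B) → Measure B} (hη : IsCondBar γ η)
    (h1 : ∀ᵐ z ∂γ, IsProbabilityMeasure z.1.2) (h2 : ∀ᵐ z ∂γ, IsProbabilityMeasure z.2.2)
    {t : B → R} (ht : Measurable t) {c : R → R → ℝ} (hc : ∀ i j, 0 ≤ c i j) :
    ∫⁻ z, FF t c (η z) z.2.2 ∂γ ≤ ∫⁻ z, FF t c z.1.2 z.2.2 ∂γ := by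
  obtain ⟨⟨g, hg, hηg⟩, hηp, hηS⟩ := hη
  have hηm : Measurable η := by
    have : η = fun z => g z.2 := funext hηg
    rw [this]; exact hg.comp measurable_snd
  have hF : Measurable (fun z : (A × Measure B) × (A × Measure B) => FF t c z.1.2 z.2.2) :=
    measurable_FF_comp ht c (measurable_snd.comp measurable_fst) (measurable_snd.comp measurable_snd)
  obtain ⟨F, hFdef⟩ : ∃ F : (A × Measure B) × (A × Measure B) → ℝ≥0∞,
      F = fun z => FF t c z.1.2 z.2.2 := ⟨_, rfl⟩
  rw [← hFdef] at hF
  obtain ⟨ν, hν⟩ : ∃ ν, ν = γ.map Prod.snd := ⟨_, rfl⟩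
  have hνp : IsProbabilityMeasure ν := hν ▸ Measure.isProbabilityMeasure_map measurable_snd.aemeasurable
  obtain ⟨τ, hτ⟩ : ∃ τ, τ = (γ.withDensity F).map Prod.snd := ⟨_, rfl⟩
  have hFfin : ∫⁻ z, F z ∂γ ≠ ∞ := by
    refine ne_top_of_le_ne_top (b := ENNReal.ofReal (∑ i, ∑ j, c i j)) ENNReal.ofReal_ne_top ?_
    calc ∫⁻ z, F z ∂γ ≤ ∫⁻ z, ENNReal.ofReal (∑ i, ∑ j, c i j) ∂γ := by
          refine lintegral_mono_ae ?_
          filter_upwards [h1, h2] with z hz1 hz2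
          rw [hFdef]
          exact FF_lt_top ht hc
      _ = _ := by simp
  have hτfin : IsFiniteMeasure τ := by
    have : IsFiniteMeasure (γ.withDensity F) := isFiniteMeasure_withDensity hFfin
    rw [hτ]; infer_instance
  have hac : τ ≪ ν := by
    rw [hτ, hν]
    exact (withDensity_absolutelyContinuous γ F).map measurable_snd
  have hD : ν.withDensity (τ.rnDeriv ν) = τ := Measure.withDensity_rnDeriv_eq τ ν hac
  have hτS : ∀ S, MeasurableSet S → τ S = ∫⁻ z in Prod.snd ⁻¹' S, F z ∂γ := by
    intro S hS
    rw [hτ, Measure.map_apply measurable_snd hS, withDensity_apply _ (measurable_snd hS)]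
  have hkm : ∀ φ ψ : R → ℝ, Measurable (fun y : A × Measure B => hk t φ ψ (g y) y.2) := by
    intro φ ψ
    exact measurable_hk_comp ht φ ψ hg measurable_snd
  have hw : ∀ w : Feas c,
      (fun y => ENNReal.ofReal (hk t (fun i => w.1.1 i) (fun i => w.1.2 i) (g y) y.2))
        ≤ᵐ[ν] τ.rnDeriv ν := by
    intro w
    obtain ⟨H, hH⟩ : ∃ H : A × Measure B → ℝ,
        H = fun y => hk t (fun i => w.1.1 i) (fun i => w.1.2 i) (g y) y.2 := ⟨_, rfl⟩
    have hHm : Measurable H := hH ▸ hkm _ _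
    have hgoal : (fun y => ENNReal.ofReal (H y)) ≤ᵐ[ν] τ.rnDeriv ν := ?_
    · rw [hH] at hgoal; exact hgoal
    refine ae_le_of_forall_setLIntegral_le_of_sigmaFinite hHm.ennreal_ofReal ?_
    intro S hS _
    obtain ⟨Pz, hPz⟩ : ∃ Pz : Set (A × Measure B), Pz = {y | 0 ≤ H y} := ⟨_, rfl⟩
    have hPm : MeasurableSet Pz := hPz ▸ hHm measurableSet_Ici
    have e1 : (fun y => ENNReal.ofReal (H y)) = Pz.indicator (fun y => ENNReal.ofReal (H y)) := by
      ext y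
      by_cases hy : y ∈ Pz
      · simp [hy]
      · rw [hPz] at hy
        have : H y ≤ 0 := le_of_lt (not_le.1 hy)
        rw [hPz]
        simp [hy, ENNReal.ofReal_of_nonpos this]
    have hSP : MeasurableSet (Pz ∩ S) := hPm.inter hS
    have hm : Measurable (fun y => ENNReal.ofReal (H y)) := hHm.ennreal_ofReal
    rw [e1, lintegral_indicator hPm, Measure.restrict_restrict hPm,
      ← withDensity_apply _ hS, hD, hν, setLIntegral_map hSP hm measurable_snd]
    obtain ⟨γ', hγ'⟩ : ∃ γ', γ' = γ.restrict (Prod.snd ⁻¹' (Pz ∩ S)) := ⟨_, rfl⟩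
    rw [← hγ']
    have hγf : IsFiniteMeasure γ' := by rw [hγ']; infer_instance
    have h1' : ∀ᵐ z ∂γ', IsProbabilityMeasure z.1.2 := hγ' ▸ ae_restrict_of_ae h1
    have h2' : ∀ᵐ z ∂γ', IsProbabilityMeasure z.2.2 := hγ' ▸ ae_restrict_of_ae h2
    have h0' : ∀ᵐ z ∂γ', IsProbabilityMeasure (η z) := ae_of_all _ hηp
    have m1 : Measurable (fun z : (A × Measure B) × (A × Measure B) => z.1.2) := by fun_prop
    have m2 : Measurable (fun z : (A × Measure B) × (A × Measure B) => z.2.2) := by fun_prop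
    have e2 : ∀ z, H z.2 = hk t (fun i => w.1.1 i) (fun i => w.1.2 i) (η z) z.2.2 := by
      intro z; rw [hηg, hH]
    have hHint : Integrable (fun z : (A × Measure B) × (A × Measure B) => H z.2) γ' := by
      simp only [e2]
      exact integrable_hk hηm h0' m2 h2' ht _ _
    rw [← ofReal_integral_eq_lintegral_ofReal hHint]
    swap
    · rw [hγ']
      refine (ae_restrict_iff' (measurable_snd hSP)).2 (ae_of_all _ fun z hz => ?_)
      have := hz.1
      rw [hPz] at this
      exact this
    simp only [e2]
    rw [integral_hk_eq hηm h0' m1 h1' m2 h2' ht _ _ (fun E hE => hγ' ▸ hηS _ hSP E hE)]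
    refine (ofReal_integral_le_lint (integrable_hk m1 h1' m2 h2' ht _ _)).trans ?_
    refine le_trans ?_ (measure_mono (μ := τ) (Set.inter_subset_right (s := Pz) (t := S)))
    rw [hτS _ hSP, ← hγ', hFdef]
    refine lintegral_mono fun z => ?_
    exact le_iSup (fun w : Feas c =>
      ENNReal.ofReal (hk t (fun i => w.1.1 i) (fun i => w.1.2 i) z.1.2 z.2.2)) w
  have hall : ∀ᵐ y ∂ν, FF t c (g y) y.2 ≤ τ.rnDeriv ν y := by
    filter_upwards [ae_all_iff.2 hw] with y hy
    exact iSup_le hy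
  have hFg : Measurable (fun y : A × Measure B => FF t c (g y) y.2) :=
    measurable_FF_comp ht c hg measurable_snd
  calc ∫⁻ z, FF t c (η z) z.2.2 ∂γ = ∫⁻ y, FF t c (g y) y.2 ∂ν := by
        rw [hν, lintegral_map hFg measurable_snd]
        simp only [hηg]
    _ ≤ ∫⁻ y, τ.rnDeriv ν y ∂ν := lintegral_mono_ae hall
    _ = τ Set.univ := by
        rw [← setLIntegral_univ, ← withDensity_apply _ MeasurableSet.univ, hD]
    _ = ∫⁻ z, F z ∂γ := by rw [hτS _ MeasurableSet.univ]; simp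
    _ = _ := by rw [hFdef]

lemma lintegral_condBar {γ : Measure ((A × Measure B) × (A × Measure B))}
    {η : (A × Measure B) × (A × Measure B) → Measure B} (hη : IsCondBar γ η) (hηm : Measurable η)
    {f : B → ℝ≥0∞} (hf : Measurable f) :
    ∫⁻ z, ∫⁻ x, f x ∂(η z) ∂γ = ∫⁻ z, ∫⁻ x, f x ∂z.1.2 ∂γ := by
  have m1 : Measurable (fun z : (A × Measure B) × (A × Measure B) => z.1.2) := by fun_prop
  rw [← Measure.lintegral_bind hηm.aemeasurable hf.aemeasurable,
    ← Measure.lintegral_bind m1.aemeasurable hf.aemeasurable]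
  congr 1
  ext E hE
  rw [Measure.bind_apply hE hηm.aemeasurable, Measure.bind_apply hE m1.aemeasurable]
  simpa using hη.2.2 Set.univ MeasurableSet.univ E hE

lemma exists_condBar [StandardBorelSpace B] [Nonempty B]
    {γ : Measure ((A × Measure B) × (A × Measure B))} [IsProbabilityMeasure γ]
    (h1 : ∀ᵐ z ∂γ, IsProbabilityMeasure z.1.2) : ∃ η, IsCondBar γ η ∧ Measurable η := by
  classical
  obtain ⟨b0⟩ := ‹Nonempty B›
  have hset : MeasurableSet {z : (A × Measure B) × (A × Measure B) | z.1.2 Set.univ = 1} := by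
    have : Measurable (fun z : (A × Measure B) × (A × Measure B) => z.1.2 Set.univ) :=
      (Measure.measurable_coe MeasurableSet.univ).comp (by fun_prop)
    exact this (measurableSet_singleton 1)
  let κ : Kernel ((A × Measure B) × (A × Measure B)) B :=
    { toFun := fun z => if z.1.2 Set.univ = 1 then z.1.2 else Measure.dirac b0
      measurable' := Measurable.ite hset (by fun_prop) measurable_const }
  have hκ : ∀ z, κ z = if z.1.2 Set.univ = 1 then z.1.2 else Measure.dirac b0 := fun _ => rfl
  have hκM : IsMarkovKernel κ := ⟨fun z => by
    rw [hκ]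
    split_ifs with h
    · exact ⟨h⟩
    · infer_instance⟩
  have hmm : Measurable (fun z : ((A × Measure B) × (A × Measure B)) × B => (z.1.2, z.2)) := by
    fun_prop
  let ρ : Measure ((A × Measure B) × B) := (γ ⊗ₘ κ).map (fun z => (z.1.2, z.2))
  have hρ : IsProbabilityMeasure ρ := Measure.isProbabilityMeasure_map hmm.aemeasurable
  have hfst : ρ.fst = γ.map Prod.snd := by
    ext S hS
    have hS' : MeasurableSet (Prod.fst ⁻¹' S : Set ((A × Measure B) × B)) := measurable_fst hS
    rw [Measure.fst_apply hS, Measure.map_apply hmm hS', Measure.map_apply measurable_snd hS]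
    have : ((fun z : ((A × Measure B) × (A × Measure B)) × B => (z.1.2, z.2)) ⁻¹'
        (Prod.fst ⁻¹' S)) = (Prod.snd ⁻¹' S) ×ˢ Set.univ := by ext; simp
    rw [this, Measure.compProd_apply_prod (measurable_snd hS) MeasurableSet.univ]
    simp
  have hgm : Measurable (fun y => ρ.condKernel y) := ρ.condKernel.measurable
  refine ⟨fun z => ρ.condKernel z.2, ⟨⟨fun y => ρ.condKernel y, hgm, fun _ => rfl⟩,
    fun z => inferInstance, ?_⟩, hgm.comp measurable_snd⟩
  intro S hS E hE
  have hmE : Measurable (fun y => ρ.condKernel y E) := (Measure.measurable_coe hE).comp hgm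
  have e1 : ρ (S ×ˢ E) = ∫⁻ z in {z | z.2 ∈ S}, ρ.condKernel z.2 E ∂γ := by
    conv_lhs => rw [← ρ.disintegrate ρ.condKernel]
    rw [Measure.compProd_apply_prod hS hE, hfst,
      setLIntegral_map hS hmE measurable_snd]
    rfl
  have e2 : ρ (S ×ˢ E) = ∫⁻ z in {z | z.2 ∈ S}, κ z E ∂γ := by
    rw [Measure.map_apply hmm (hS.prod hE)]
    have : ((fun z : ((A × Measure B) × (A × Measure B)) × B => (z.1.2, z.2)) ⁻¹'
        (S ×ˢ E)) = (Prod.snd ⁻¹' S) ×ˢ E := by ext; simp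
    rw [this, Measure.compProd_apply_prod (measurable_snd hS) hE]
    rfl
  rw [← e1, e2]
  refine lintegral_congr_ae (ae_restrict_of_ae ?_)
  filter_upwards [h1] with z hz
  rw [hκ, if_pos hz.measure_univ]

end Cond

section Mainsec

lemma rpow_inv_rpow' {p : ℝ} (hp : 1 ≤ p) (x : ℝ≥0∞) : (x ^ (1 / p)) ^ p = x := by
  rw [← ENNReal.rpow_mul, one_div, inv_mul_cancel₀ (by linarith), ENNReal.rpow_one]

lemma rpow_rpow_inv' {p : ℝ} (hp : 1 ≤ p) (x : ℝ≥0∞) : (x ^ p) ^ (1 / p) = x := by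
  rw [← ENNReal.rpow_mul, one_div, mul_inv_cancel₀ (by linarith), ENNReal.rpow_one]

variable {A X : Type*} [MeasurableSpace A] [MetricSpace X] [SecondCountableTopology X]
  [MeasurableSpace X] [BorelSpace X]

lemma measurable_EE {Z : Type*} [MeasurableSpace Z] (p : ℝ) {T : X → X} (hT : Measurable T)
    {κ : Z → Measure X} (hκ : Measurable κ) : Measurable (fun z => EE p T (κ z)) := by
  unfold EE
  have hf : Measurable (fun x => edist x (T x) ^ p) := (measurable_id.edist hT).pow_const p
  have h := (Measure.measurable_lintegral hf).comp hκ
  have h' := h.pow_const (1 / p)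
  exact h'

lemma norm_EE {Z : Type*} [MeasurableSpace Z] {P : Measure Z} {p : ℝ} (hp : 1 ≤ p) {T : X → X}
    (κ : Z → Measure X) :
    (∫⁻ z, EE p T (κ z) ^ p ∂P) = ∫⁻ z, ∫⁻ x, edist x (T x) ^ p ∂(κ z) ∂P := by
  unfold EE
  simp only [rpow_inv_rpow' hp]

lemma condBar_Wp_le [CompleteSpace X] {p : ℝ} (hp : 1 ≤ p)
    {γ : Measure ((A × Measure X) × (A × Measure X))} [IsProbabilityMeasure γ]
    {η : (A × Measure X) × (A × Measure X) → Measure X} (hη : IsCondBar γ η) (hηm : Measurable η)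
    (h1 : ∀ᵐ z ∂γ, IsProbabilityMeasure z.1.2) (h2 : ∀ᵐ z ∂γ, IsProbabilityMeasure z.2.2)
    (x0 : X) (hM1 : ∫⁻ z, ∫⁻ x, edist x0 x ^ p ∂z.1.2 ∂γ ≠ ∞)
    (hM2 : ∫⁻ z, ∫⁻ x, edist x0 x ^ p ∂z.2.2 ∂γ ≠ ∞) :
    (∫⁻ z, Wp p edist (η z) z.2.2 ^ p ∂γ) ^ (1 / p) ≤
      (∫⁻ z, Wp p edist z.1.2 z.2.2 ^ p ∂γ) ^ (1 / p) := by
  have hp0 : 0 < p := by linarith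
  have hp1 : 0 < 1 / p := by positivity
  have m1 : Measurable (fun z : (A × Measure X) × (A × Measure X) => z.1.2) := by fun_prop
  have m2 : Measurable (fun z : (A × Measure X) × (A × Measure X) => z.2.2) := by fun_prop
  refine ENNReal.le_of_forall_pos_le_add fun ε hε _ => ?_
  have hε4 : 0 < ((ε : ℝ≥0∞) / 4) ^ p := by
    refine ENNReal.rpow_pos ?_ ?_
    · exact ENNReal.div_pos (by simpa using hε.ne') (by norm_num)
    · exact ENNReal.div_ne_top ENNReal.coe_ne_top (by norm_num)
  have mx0 : Measurable (fun x => edist x0 x ^ p) := (measurable_const.edist measurable_id).pow_const p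
  obtain ⟨T, hT⟩ := exists_quant hp (γ.bind (fun z => z.1.2) + γ.bind (fun z => z.2.2)) x0 (by
    rw [lintegral_add_measure, Measure.lintegral_bind m1.aemeasurable mx0.aemeasurable,
      Measure.lintegral_bind m2.aemeasurable mx0.aemeasurable]
    exact ENNReal.add_ne_top.2 ⟨hM1, hM2⟩) hε4
  have mT : Measurable (fun x => edist x (T x) ^ p) := (measurable_id.edist T.measurable).pow_const p
  rw [lintegral_add_measure, Measure.lintegral_bind m1.aemeasurable mT.aemeasurable,
      Measure.lintegral_bind m2.aemeasurable mT.aemeasurable] at hT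
  have hb : (∫⁻ z, EE p T z.1.2 ^ p ∂γ) ^ (1 / p) ≤ (ε : ℝ≥0∞) / 4 := by
    rw [norm_EE hp (fun z : (A × Measure X) × (A × Measure X) => z.1.2),
      ← rpow_rpow_inv' hp ((ε : ℝ≥0∞) / 4)]
    exact ENNReal.rpow_le_rpow (le_self_add.trans hT) hp1.le
  have hc : (∫⁻ z, EE p T z.2.2 ^ p ∂γ) ^ (1 / p) ≤ (ε : ℝ≥0∞) / 4 := by
    rw [norm_EE hp (fun z : (A × Measure X) × (A × Measure X) => z.2.2),
      ← rpow_rpow_inv' hp ((ε : ℝ≥0∞) / 4)]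
    exact ENNReal.rpow_le_rpow (le_add_self.trans hT) hp1.le
  have ha : (∫⁻ z, EE p T (η z) ^ p ∂γ) ^ (1 / p) ≤ (ε : ℝ≥0∞) / 4 := by
    rw [norm_EE hp η, lintegral_condBar hη hηm mT,
      ← norm_EE hp (fun z : (A × Measure X) × (A × Measure X) => z.1.2)]
    exact hb
  have ma := measurable_EE p T.measurable hηm
  have mb := measurable_EE p T.measurable m1
  have mc := measurable_EE p T.measurable m2
  obtain ⟨t, ht, s, hst⟩ : ∃ t : X → {x // x ∈ T.range}, Measurable t ∧
      ∃ s : {x // x ∈ T.range} → X, (fun x => s (t x)) = T :=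
    ⟨fun x => ⟨T x, T.mem_range_self x⟩, T.measurable.subtype_mk, Subtype.val, rfl⟩
  have mF1 := measurable_FF_comp ht (cc p s) hηm m2
  have mF2 := measurable_FF_comp ht (cc p s) m1 m2
  have step1 : (∫⁻ z, Wp p edist (η z) z.2.2 ^ p ∂γ) ^ (1 / p) ≤
      (∫⁻ z, EE p T (η z) ^ p ∂γ) ^ (1 / p) +
      (∫⁻ z, (FF t (cc p s) (η z) z.2.2 ^ (1 / p)) ^ p ∂γ) ^ (1 / p) +
      (∫⁻ z, EE p T z.2.2 ^ p ∂γ) ^ (1 / p) := by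
    refine lp_mink3 hp ma.aemeasurable (mF1.pow_const _).aemeasurable mc.aemeasurable ?_
    filter_upwards [h2] with z hz
    have := hη.2.1 z
    have h := Wp_le_FF hp ht s (η z) z.2.2
    rwa [hst] at h
  have step2 : (∫⁻ z, (FF t (cc p s) (η z) z.2.2 ^ (1 / p)) ^ p ∂γ) ^ (1 / p) ≤
      (∫⁻ z, (FF t (cc p s) z.1.2 z.2.2 ^ (1 / p)) ^ p ∂γ) ^ (1 / p) := by
    simp only [rpow_inv_rpow' hp]
    exact ENNReal.rpow_le_rpow (lintegral_FF_le hη h1 h2 ht (fun i j => cc_nonneg _ _ _ _)) hp1.le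
  have step3 : (∫⁻ z, (FF t (cc p s) z.1.2 z.2.2 ^ (1 / p)) ^ p ∂γ) ^ (1 / p) ≤
      (∫⁻ z, (FF t (cc p s) z.1.2 z.2.2 ^ (1 / p) - (EE p T z.1.2 + EE p T z.2.2)) ^ p ∂γ) ^ (1 / p)
      + (∫⁻ z, EE p T z.1.2 ^ p ∂γ) ^ (1 / p) + (∫⁻ z, EE p T z.2.2 ^ p ∂γ) ^ (1 / p) := by
    refine lp_mink3 hp ((mF2.pow_const _).sub (mb.add mc)).aemeasurable mb.aemeasurable
      mc.aemeasurable (ae_of_all _ fun z => ?_)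
    rw [add_assoc]
    exact le_tsub_add
  have step4 : (∫⁻ z, (FF t (cc p s) z.1.2 z.2.2 ^ (1 / p) -
      (EE p T z.1.2 + EE p T z.2.2)) ^ p ∂γ) ^ (1 / p) ≤
      (∫⁻ z, Wp p edist z.1.2 z.2.2 ^ p ∂γ) ^ (1 / p) := by
    refine ENNReal.rpow_le_rpow (lintegral_mono_ae ?_) hp1.le
    filter_upwards [h1] with z hz
    refine ENNReal.rpow_le_rpow ?_ hp0.le
    have h := FF_sub_le_Wp hp ht s z.1.2 z.2.2
    rwa [hst] at h
  have h4 : (ε : ℝ≥0∞) / 4 + (ε : ℝ≥0∞) / 4 + ((ε : ℝ≥0∞) / 4 + (ε : ℝ≥0∞) / 4) = ε := by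
    have : (4 : ℝ≥0∞) = 2 * 2 := by norm_num
    have e : (ε : ℝ≥0∞) / 4 = ε / 2 / 2 := by
      rw [this, div_eq_mul_inv, ENNReal.mul_inv (by simp) (by simp), div_eq_mul_inv,
        div_eq_mul_inv, mul_assoc]
    rw [e, ENNReal.add_halves, ENNReal.add_halves]
  calc _ ≤ _ := step1
    _ ≤ (ε : ℝ≥0∞) / 4 + ((∫⁻ z, Wp p edist z.1.2 z.2.2 ^ p ∂γ) ^ (1 / p) + (ε : ℝ≥0∞) / 4 +
        (ε : ℝ≥0∞) / 4) + (ε : ℝ≥0∞) / 4 :=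
      add_le_add (add_le_add ha (step2.trans (step3.trans
        (add_le_add (add_le_add step4 hb) hc)))) hc
    _ = (∫⁻ z, Wp p edist z.1.2 z.2.2 ^ p ∂γ) ^ (1 / p) + ((ε : ℝ≥0∞) / 4 + (ε : ℝ≥0∞) / 4 +
        ((ε : ℝ≥0∞) / 4 + (ε : ℝ≥0∞) / 4)) := by ring
    _ = _ := by rw [h4]

lemma moment_finite {A : Type*} [MeasurableSpace A] {p : ℝ} (hp : 1 ≤ p) {dA : A → A → ℝ≥0∞}
    {μ : Measure (A × Measure X)} (hμ : MemPpLift p dA (edist : X → X → ℝ≥0∞) μ) (x0 : X) :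
    ∫⁻ z, ∫⁻ x, edist x0 x ^ p ∂z.2 ∂μ ≠ ∞ := by
  have hp0 : 0 < p := by linarith
  have hp1 : 0 < 1 / p := by positivity
  obtain ⟨hμp, -, z0, ⟨hz0p, x1, hx1⟩, hfin⟩ := hμ
  have mx : ∀ y : X, Measurable (fun x => edist y x) := fun y =>
    measurable_const.edist measurable_id
  obtain ⟨C, hC⟩ : ∃ C, C = (∫⁻ x, edist x0 x ^ p ∂z0.2) ^ (1 / p) := ⟨_, rfl⟩
  have hCfin : C ≠ ∞ := by
    have h : C ≤ (∫⁻ x, edist x0 x1 ^ p ∂z0.2) ^ (1 / p) + (∫⁻ x, edist x1 x ^ p ∂z0.2) ^ (1 / p)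
        + (∫⁻ x : X, (0 : ℝ≥0∞) ^ p ∂z0.2) ^ (1 / p) := by
      rw [hC]
      refine lp_mink3 hp aemeasurable_const (mx x1).aemeasurable aemeasurable_const
        (ae_of_all _ fun x => ?_)
      rw [add_zero]; exact edist_triangle _ _ _
    refine ne_top_of_le_ne_top ?_ h
    refine ENNReal.add_ne_top.2 ⟨ENNReal.add_ne_top.2 ⟨?_, ?_⟩, ?_⟩
    · simp only [lintegral_const, measure_univ, mul_one]
      rw [rpow_rpow_inv' hp]; exact edist_ne_top _ _
    · exact ENNReal.rpow_ne_top_of_nonneg hp1.le hx1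
    · simp [ENNReal.zero_rpow_of_pos hp0, hp0]
  have hN : ∀ z : A × Measure X,
      (∫⁻ x, edist x0 x ^ p ∂z.2) ^ (1 / p) - C ≤ liftDist p dA edist z0 z := by
    intro z
    have hW : (∫⁻ x, edist x0 x ^ p ∂z.2) ^ (1 / p) - C ≤ Wp p edist z0.2 z.2 := by
      refine le_iInf₂ fun π hπ => ?_
      rw [tsub_le_iff_right, hC]
      have e1 : ∫⁻ x, edist x0 x ^ p ∂z0.2 = ∫⁻ w, edist x0 w.1 ^ p ∂π := by
        rw [← hπ.1, lintegral_map ((mx x0).pow_const p) measurable_fst]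
      have e2 : ∫⁻ x, edist x0 x ^ p ∂z.2 = ∫⁻ w, edist x0 w.2 ^ p ∂π := by
        rw [← hπ.2, lintegral_map ((mx x0).pow_const p) measurable_snd]
      rw [e1, e2]
      have h := lp_mink3 (P := π) (f := fun w : X × X => edist x0 w.2)
        (u := fun w => edist w.1 w.2) (v := fun w => edist x0 w.1) (w := fun _ => 0) hp
        (measurable_fst.edist measurable_snd).aemeasurable
        ((mx x0).comp measurable_fst).aemeasurable aemeasurable_const (ae_of_all _ fun w => by
          rw [add_zero, add_comm]; exact edist_triangle _ _ _)
      simpa [ENNReal.zero_rpow_of_pos hp0, hp0] using h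
    refine hW.trans ?_
    unfold liftDist
    calc _ = (Wp p edist z0.2 z.2 ^ p) ^ (1 / p) := (rpow_rpow_inv' hp _).symm
      _ ≤ _ := ENNReal.rpow_le_rpow le_add_self hp1.le
  have mN : Measurable (fun z : A × Measure X => (∫⁻ x, edist x0 x ^ p ∂z.2) ^ (1 / p)) := by
    have h := (Measure.measurable_lintegral ((mx x0).pow_const p)).comp
      (measurable_snd : Measurable (Prod.snd : A × Measure X → Measure X))
    have h' := h.pow_const (1 / p)
    exact h'
  have h := lp_mink3 (P := μ) (f := fun z => (∫⁻ x, edist x0 x ^ p ∂z.2) ^ (1 / p))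
    (u := fun z => (∫⁻ x, edist x0 x ^ p ∂z.2) ^ (1 / p) - C) (v := fun _ => C) (w := fun _ => 0) hp
    (mN.sub_const C).aemeasurable aemeasurable_const aemeasurable_const (ae_of_all _ fun z => by
      rw [add_zero]; exact le_tsub_add)
  simp only [rpow_inv_rpow' hp] at h
  have hlt : (∫⁻ z, ∫⁻ x, edist x0 x ^ p ∂z.2 ∂μ) ^ (1 / p) ≠ ∞ := by
    refine ne_top_of_le_ne_top ?_ h
    refine ENNReal.add_ne_top.2 ⟨ENNReal.add_ne_top.2 ⟨?_, ?_⟩, ?_⟩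
    · refine ENNReal.rpow_ne_top_of_nonneg hp1.le (ne_top_of_le_ne_top hfin ?_)
      exact lintegral_mono fun z => ENNReal.rpow_le_rpow (hN z) hp0.le
    · simp only [lintegral_const, measure_univ, mul_one]
      rw [rpow_rpow_inv' hp]; exact hCfin
    · simp [ENNReal.zero_rpow_of_pos hp0, hp0]
  intro hcon
  rw [hcon, ENNReal.top_rpow_of_pos hp1] at hlt
  exact hlt rfl

end Mainsec

/-- **Lemma 4.5.**  `CW̄_p ≤ AW̄_p` on `𝒫_p(𝒳₁ × 𝒫_p(𝒳₂))`. -/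
theorem CWbar_le_AWbar
    {X1 X2 : Type} [MetricSpace X1] [CompleteSpace X1] [SecondCountableTopology X1]
    [MeasurableSpace X1] [BorelSpace X1] [Nonempty X1]
    [MetricSpace X2] [CompleteSpace X2] [SecondCountableTopology X2]
    [MeasurableSpace X2] [BorelSpace X2] [Nonempty X2]
    (p : ℝ) (hp : 1 ≤ p)
    (μ ν : Measure (X1 × Measure X2))
    (hμ : MemPpLift p (edist : X1 → X1 → ℝ≥0∞) (edist : X2 → X2 → ℝ≥0∞) μ)
    (hν : MemPpLift p (edist : X1 → X1 → ℝ≥0∞) (edist : X2 → X2 → ℝ≥0∞) ν) :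
    CWbar p (edist : X1 → X1 → ℝ≥0∞) (edist : X2 → X2 → ℝ≥0∞) μ ν ≤
      AWbar p edist edist μ ν := by
  have hp0 : 0 < p := by linarith
  have hp1 : 0 < 1 / p := by positivity
  obtain ⟨x0⟩ := ‹Nonempty X2›
  have hne : Nonempty X2 := ⟨x0⟩
  have hM1 := moment_finite hp hμ x0
  have hM2 := moment_finite hp hν x0
  refine le_iInf₂ fun γ hγ => ?_
  have hμp := hμ.1
  have hγp : IsProbabilityMeasure γ := isProb_of_cpl hγ
  have h1 : ∀ᵐ z ∂γ, IsProbabilityMeasure z.1.2 := by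
    have h := hμ.2.1
    rw [← hγ.1] at h
    filter_upwards [ae_of_ae_map measurable_fst.aemeasurable h] with z hz using hz.1
  have h2 : ∀ᵐ z ∂γ, IsProbabilityMeasure z.2.2 := by
    have h := hν.2.1
    rw [← hγ.2] at h
    filter_upwards [ae_of_ae_map measurable_snd.aemeasurable h] with z hz using hz.1
  have mN : Measurable (fun z : X1 × Measure X2 => ∫⁻ x, edist x0 x ^ p ∂z.2) := by
    have mx0 : Measurable (fun x => edist x0 x ^ p) :=
      (measurable_const.edist measurable_id).pow_const p
    have h := (Measure.measurable_lintegral mx0).comp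
      (measurable_snd : Measurable (Prod.snd : X1 × Measure X2 → Measure X2))
    exact h
  rw [← hγ.1, lintegral_map mN measurable_fst] at hM1
  rw [← hγ.2, lintegral_map mN measurable_snd] at hM2
  obtain ⟨η, hη, hηm⟩ := exists_condBar h1
  have key := condBar_Wp_le hp hη hηm h1 h2 x0 hM1 hM2
  rw [ENNReal.rpow_le_rpow_iff hp1] at key
  refine (iInf₂_le γ hγ).trans ((iInf₂_le η hη).trans ?_)
  refine ENNReal.rpow_le_rpow ?_ hp1.le
  have me : Measurable (fun z : (X1 × Measure X2) × (X1 × Measure X2) =>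
      edist z.1.1 z.2.1 ^ p) := by
    have a1 : Measurable (fun z : (X1 × Measure X2) × (X1 × Measure X2) => z.1.1) := by fun_prop
    have a2 : Measurable (fun z : (X1 × Measure X2) × (X1 × Measure X2) => z.2.1) := by fun_prop
    exact (a1.edist a2).pow_const p
  unfold liftDist
  simp only [rpow_inv_rpow' hp]
  rw [lintegral_add_left me, lintegral_add_left me]
  exact add_le_add le_rfl key

end AWPaper
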